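/- Let φ : P(X) → [0, ∞] be symmetric, concave, and lower semicontinuous, and let Q, L, ε satisfy 0 ≤ ε ≤ 1 − ∑_{x=1}^L Q↓(x). Then for every pair of random variables (X, Y) with P_X = Q and P_e^{(L)}(X|Y) ≤ ε, the generalized conditional information satisfies h_φ(X|Y) := E[φ(P_{X|Y})] ≤ φ(P₁), where P₁ is the Fano-type-1 distribution associated with (Q, L, ε). -/

import Mathlib

noncomputable section
open scoped Classical

def IsPmf {α : Type*} (p : α → ℝ) : Prop := (∀ x, 0 ≤ p x) ∧ ∑' x, p x = 1

def topSum (p : ℕ → ℝ) (k : ℕ) : ℝ :=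
  sSup {t : ℝ | ∃ s : Finset ℕ, s.card = k ∧ t = ∑ x ∈ s, p x}

/-- `d` is the decreasing rearrangement of `p` (indexed from `1`):
`d` is nonincreasing on `{1,2,...}`, vanishes at the unused index `0`, and its
partial sums are the top-`k` sums of `p`. -/
def IsDecRearr (p d : ℕ → ℝ) : Prop :=
  d 0 = 0 ∧ (∀ i j, 1 ≤ i → i ≤ j → d j ≤ d i) ∧
    ∀ k, ∑ i ∈ Finset.Icc 1 k, d i = topSum p k

/-- The weight `V(j)` of the Fano-type-1 distribution. -/
def fanoV (d : ℕ → ℝ) (L : ℕ) (ε : ℝ) (j : ℕ) : ℝ :=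
  if j ≤ L then ((1 - ε) - ∑ i ∈ Finset.Icc 1 (j - 1), d i) / ((L : ℝ) - j + 1) else 1

/-- The weight `W(k)` of the Fano-type-1 distribution (for finite `k`). -/
def fanoW (d : ℕ → ℝ) (L : ℕ) (ε : ℝ) (k : ℕ) : ℝ :=
  if k = L then -1 else ((∑ i ∈ Finset.Icc 1 k, d i) - (1 - ε)) / ((k : ℝ) - L)

/-- `J := min{1 ≤ j < ∞ | Q↓(j) < V(j)}`. -/
def fanoJ (d : ℕ → ℝ) (L : ℕ) (ε : ℝ) : ℕ :=
  sInf {j : ℕ | 1 ≤ j ∧ d j < fanoV d L ε j}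

/-- `K₁ := sup{L ≤ k < ∞ | W(k) < Q↓(k)}`, an extended natural number. -/
def fanoK (d : ℕ → ℝ) (L : ℕ) (ε : ℝ) : ℕ∞ :=
  sSup {k : ℕ∞ | ∃ n : ℕ, k = (n : ℕ∞) ∧ L ≤ n ∧ fanoW d L ε n < d n}

/-- The Fano-type-1 distribution built from the decreasing rearrangement `d` of
`Q`, list size `L` and error level `ε` (with `W(∞) = 0`). -/
def fanoType1 (d : ℕ → ℝ) (L : ℕ) (ε : ℝ) (x : ℕ) : ℝ :=
  if x < fanoJ d L ε then d x
  else if x ≤ L then fanoV d L ε (fanoJ d L ε)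
  else if (x : ℕ∞) ≤ fanoK d L ε then
    (if fanoK d L ε = ⊤ then 0 else fanoW d L ε (fanoK d L ε).toNat)
  else d x


open Filter Topology

/-!
Given `Y = y`, list the outcomes in decreasing order of `P_{X|Y=y}`. By symmetry and semicontinuity
this does not change `φ`, and by Jensen's inequality the conditional information is at most `φ R`,
where `R` is the mixture of the rearranged conditional laws. The partial sums of `R` are the
averages of the top sums of the `P_{X|Y=y}`, hence they dominate those of `Q↓`, and the `L`th one is
at least `1 - ε`. Among all decreasing distributions with these two properties `P₁` has the smallest
partial sums: it is `Q↓` with its head raised and its tail cut down to constant levels. So `R`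
majorizes `P₁`, and a symmetric concave lower semicontinuous `φ` is Schur concave.
-/

section Semicontinuity

variable {X γ : Type*} [TopologicalSpace X] {φ : X → γ} {s : Set X}

lemma le_of_lowerSemicontinuousOn_of_tendsto [LinearOrder γ] {ι : Type*} {l : Filter ι} [l.NeBot]
    (hφ : LowerSemicontinuousOn φ s) {u : ι → X} {x : X} (hu : ∀ n, u n ∈ s) (hx : x ∈ s)
    (hlim : Tendsto u l (𝓝 x)) {c : γ} (hc : ∀ n, φ (u n) ≤ c) : φ x ≤ c := by
  by_contra! hcx
  have hlim' : Tendsto u l (𝓝[s] x) := tendsto_nhdsWithin_iff.2 ⟨hlim, .of_forall hu⟩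
  obtain ⟨n, hn⟩ := (hlim'.eventually (hφ x hx c hcx)).exists
  exact (hc n).not_gt hn

lemma lowerSemicontinuousOn_of_le_liminf_seq [FirstCountableTopology X] [CompleteLinearOrder γ]
    (h : ∀ x, ∀ u : ℕ → X, Tendsto u atTop (𝓝 x) → φ x ≤ liminf (fun n => φ (u n)) atTop) :
    LowerSemicontinuousOn φ s := by
  intro x _ c hc
  by_contra hcon
  obtain ⟨u, hu, huc⟩ := exists_seq_forall_of_frequently (not_eventually.1 hcon)
  refine hc.not_ge ((h x u (hu.mono_right nhdsWithin_le_nhds)).trans ?_)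
  exact liminf_le_of_frequently_le' (.of_forall fun n => not_lt.1 (huc n))

end Semicontinuity

section Pmf

open Function

variable {α β : Type*} {p r : α → ℝ}

lemma isPmf_of_hasSum (h0 : ∀ x, 0 ≤ p x) (h : HasSum p 1) : IsPmf p :=
  ⟨h0, h.tsum_eq⟩

namespace IsPmf

lemma summable (h : IsPmf p) : Summable p := by
  by_contra hn
  exact zero_ne_one ((tsum_eq_zero_of_not_summable hn).symm.trans h.2)

lemma hasSum (h : IsPmf p) : HasSum p 1 :=
  h.2 ▸ h.summable.hasSum

lemma sum_le_one (h : IsPmf p) (s : Finset α) : ∑ x ∈ s, p x ≤ 1 :=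
  sum_le_hasSum s (fun x _ => h.1 x) h.hasSum

lemma apply_le_one (h : IsPmf p) (x : α) : p x ≤ 1 := by
  simpa using h.sum_le_one {x}

lemma eq_of_le (hp : IsPmf p) (hr : IsPmf r) (hle : ∀ x, p x ≤ r x) : p = r := by
  have hsum : HasSum (fun x => r x - p x) 0 := by simpa using hr.hasSum.sub hp.hasSum
  have hzero := (hasSum_zero_iff_of_nonneg fun x => sub_nonneg.2 (hle x)).1 hsum
  exact funext fun x => (sub_eq_zero.1 (congrFun hzero x)).symm

lemma comp_injective (h : IsPmf p) {e : β → α} (he : Injective e) (hs : support p ⊆ Set.range e) :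
    IsPmf (p ∘ e) :=
  isPmf_of_hasSum (fun _ => h.1 _) ((he.hasSum_iff fun _ hx => by_contra fun h0 => hx (hs h0)).2
    h.hasSum)

lemma comp_perm (h : IsPmf p) (σ : Equiv.Perm α) : IsPmf (p ∘ σ) :=
  h.comp_injective σ.injective (by simp)

lemma convexComb (hp : IsPmf p) (hr : IsPmf r) {l : ℝ} (hl0 : 0 ≤ l) (hl1 : l ≤ 1) :
    IsPmf (fun x => l * p x + (1 - l) * r x) := by
  refine isPmf_of_hasSum (fun x => ?_) ?_
  · exact add_nonneg (mul_nonneg hl0 (hp.1 x)) (mul_nonneg (sub_nonneg.2 hl1) (hr.1 x))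
  · simpa using (hp.hasSum.mul_left l).add (hr.hasSum.mul_left (1 - l))

end IsPmf

/-- Symmetry of a functional on `P(α)`: relabelling the outcomes does not change its value. -/
def SymmetricOnPmf (φ : (α → ℝ) → ENNReal) : Prop :=
  ∀ p, IsPmf p → ∀ σ : Equiv.Perm α, φ (p ∘ σ) = φ p

/-- Concavity of a functional on `P(α)`. Mathlib's `ConcaveOn` with real scalars does not apply,
since the values `[0, ∞]` carry no real module structure. -/
def ConcaveOnPmf (φ : (α → ℝ) → ENNReal) : Prop :=
  ∀ p r, IsPmf p → IsPmf r → ∀ l : ℝ, 0 ≤ l → l ≤ 1 →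
    ENNReal.ofReal l * φ p + ENNReal.ofReal (1 - l) * φ r ≤ φ (fun x => l * p x + (1 - l) * r x)

end Pmf

section Mixture

variable {α β : Type*} {q : β → ℝ} {V : β → α → ℝ}

/-- The mixture `∑ y, q y • V y` of the family `V` with weights `q`: the marginal of the first
coordinate when the second has law `q` and the conditional laws are `V`. -/
def mixture (q : β → ℝ) (V : β → α → ℝ) (x : α) : ℝ :=
  ∑' y, q y * V y x

lemma hasSum_mixture (hq : IsPmf q) (hV : ∀ y, IsPmf (V y)) (x : α) :
    HasSum (fun y => q y * V y x) (mixture q V x) :=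
  (hq.summable.of_nonneg_of_le (fun y => mul_nonneg (hq.1 y) ((hV y).1 x)) fun y =>
    mul_le_of_le_one_right (hq.1 y) ((hV y).apply_le_one x)).hasSum

lemma hasSum_sum_mixture (hq : IsPmf q) (hV : ∀ y, IsPmf (V y)) (s : Finset α) :
    HasSum (fun y => q y * ∑ x ∈ s, V y x) (∑ x ∈ s, mixture q V x) := by
  simpa only [Finset.mul_sum] using hasSum_sum fun x _ => hasSum_mixture hq hV x

lemma isPmf_mixture (hq : IsPmf q) (hV : ∀ y, IsPmf (V y)) : IsPmf (mixture q V) := by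
  have hrow : ∀ y, HasSum (fun x => q y * V y x) (q y) := fun y => by
    simpa using (hV y).hasSum.mul_left (q y)
  have hjoint : Summable fun z : β × α => q z.1 * V z.1 z.2 := by
    refine (summable_prod_of_nonneg fun z => mul_nonneg (hq.1 _) ((hV _).1 _)).2
      ⟨fun y => (hrow y).summable, ?_⟩
    simpa only [(hrow _).tsum_eq] using hq.summable
  refine ⟨fun x => tsum_nonneg fun y => mul_nonneg (hq.1 y) ((hV y).1 x), ?_⟩
  calc ∑' x, mixture q V x
    _ = ∑' y, ∑' x, q y * V y x := Summable.tsum_comm (f := fun y x => q y * V y x) hjoint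
    _ = 1 := by simp only [(hrow _).tsum_eq, hq.2]

lemma antitone_mixture [Preorder α] (hq : IsPmf q) (hV : ∀ y, IsPmf (V y))
    (hanti : ∀ y, Antitone (V y)) : Antitone (mixture q V) := fun i j hij =>
  hasSum_le (fun y => mul_le_mul_of_nonneg_left (hanti y hij) (hq.1 y)) (hasSum_mixture hq hV j)
    (hasSum_mixture hq hV i)

variable {φ : (α → ℝ) → ENNReal}

lemma forall_eq_zero_of_sum_mul_le_zero {s : Finset β} (hq : ∀ y ∈ s, 0 ≤ q y)
    (hV : ∀ y, IsPmf (V y)) (h : ∀ x, ∑ y ∈ s, q y * V y x ≤ 0) : ∀ y ∈ s, q y = 0 := by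
  have hmass : HasSum (fun x => ∑ y ∈ s, q y * V y x) (∑ y ∈ s, q y) := by
    simpa only [mul_one] using hasSum_sum fun y _ => (hV y).hasSum.mul_left (q y)
  exact (Finset.sum_eq_zero_iff_of_nonneg hq).1
    ((hasSum_le h hmass hasSum_zero).antisymm (Finset.sum_nonneg hq))

/-- Peel one component off at a time, renormalizing what remains of `M`. -/
lemma ConcaveOnPmf.sum_le_of_sum_le (hφ : ConcaveOnPmf φ) (hV : ∀ y, IsPmf (V y)) (s : Finset β) :
    ∀ {q : β → ℝ} {M : α → ℝ}, (∀ y, 0 ≤ q y) → IsPmf M → (∀ x, ∑ y ∈ s, q y * V y x ≤ M x) →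
      ∑ y ∈ s, ENNReal.ofReal (q y) * φ (V y) ≤ φ M := by
  induction s using Finset.induction_on with
  | empty => simp
  | insert a s ha ih =>
    intro q M hq hM hle
    simp only [Finset.sum_insert ha] at hle ⊢
    have hs0 : ∀ x, 0 ≤ ∑ y ∈ s, q y * V y x := fun x =>
      Finset.sum_nonneg fun y _ => mul_nonneg (hq y) ((hV y).1 x)
    have hrest : HasSum (fun x => M x - q a * V a x) (1 - q a) := by
      simpa using hM.hasSum.sub ((hV a).hasSum.mul_left (q a))
    have hrest0 : ∀ x, 0 ≤ M x - q a * V a x := fun x => by linarith [hle x, hs0 x]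
    rcases (hrest.nonneg hrest0).eq_or_lt with hqa | hqa
    · have hqa1 : q a = 1 := by linarith
      obtain rfl : V a = M := (hV a).eq_of_le hM fun x => by simpa [hqa1] using hrest0 x
      have hqs : ∀ y ∈ s, q y = 0 :=
        forall_eq_zero_of_sum_mul_le_zero (fun y _ => hq y) hV fun x => by simpa [hqa1] using hle x
      rw [Finset.sum_eq_zero fun y hy => by simp [hqs y hy]]
      simp [hqa1]
    · set c := 1 - q a with hc
      have hM' : IsPmf fun x => c⁻¹ * (M x - q a * V a x) :=
        isPmf_of_hasSum (fun x => mul_nonneg (inv_nonneg.2 hqa.le) (hrest0 x)) (by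
          simpa [inv_mul_cancel₀ hqa.ne'] using hrest.mul_left c⁻¹)
      have hind := ih (q := fun y => c⁻¹ * q y) (fun y => mul_nonneg (inv_nonneg.2 hqa.le) (hq y))
        hM' fun x => by
          simp only [mul_assoc, ← Finset.mul_sum]
          gcongr
          linarith [hle x]
      have hscale : ∀ y, ENNReal.ofReal (q y) =
          ENNReal.ofReal c * ENNReal.ofReal (c⁻¹ * q y) := fun y => by
        rw [← ENNReal.ofReal_mul hqa.le, mul_inv_cancel_left₀ hqa.ne']
      calc ENNReal.ofReal (q a) * φ (V a) + ∑ y ∈ s, ENNReal.ofReal (q y) * φ (V y)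
        _ = ENNReal.ofReal (q a) * φ (V a) + ENNReal.ofReal c *
              ∑ y ∈ s, ENNReal.ofReal (c⁻¹ * q y) * φ (V y) := by
            simp only [hscale, Finset.mul_sum, mul_assoc]
        _ ≤ _ := by gcongr
        _ ≤ _ := hφ (V a) _ (hV a) hM' (q a) (hq a) (by linarith)
        _ = φ M := by simp only [← hc, mul_inv_cancel_left₀ hqa.ne', add_sub_cancel]

lemma ConcaveOnPmf.tsum_le_mixture (hφ : ConcaveOnPmf φ) (hq : IsPmf q) (hV : ∀ y, IsPmf (V y)) :
    ∑' y, ENNReal.ofReal (q y) * φ (V y) ≤ φ (mixture q V) := by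
  rw [ENNReal.tsum_eq_iSup_sum]
  exact iSup_le fun s => hφ.sum_le_of_sum_le hV s hq.1 (isPmf_mixture hq hV) fun x =>
    sum_le_hasSum s (fun y _ => mul_nonneg (hq.1 y) ((hV y).1 x)) (hasSum_mixture hq hV x)

end Mixture

section Relabelling

open Function

variable {φ : (ℕ → ℝ) → ENNReal} {p r : ℕ → ℝ}

lemma exists_perm_eqOn_Iio {f : ℕ → ℕ} {n : ℕ} (hf : Set.InjOn f (Set.Iio n)) :
    ∃ σ : Equiv.Perm ℕ, Set.EqOn σ f (Set.Iio n) := by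
  have := Equiv.Perm.isMultiplyPretransitive ℕ n
  obtain ⟨σ, hσ⟩ := MulAction.exists_smul_eq (Equiv.Perm ℕ) Fin.valEmbedding
    (⟨fun i : Fin n => f i, fun i j h => Fin.ext (hf i.2 j.2 h)⟩ : Fin n ↪ ℕ)
  exact ⟨σ, fun i hi => DFunLike.congr_fun hσ ⟨i, hi⟩⟩

/-- A permutation can only be prescribed on finitely many outcomes at a time; lower semicontinuity
passes to the limit. -/
lemma SymmetricOnPmf.le_of_tendsto_relabel (hsym : SymmetricOnPmf φ)
    (hlsc : LowerSemicontinuousOn φ {p | IsPmf p}) (hp : IsPmf p) (hr : IsPmf r) {f : ℕ → ℕ → ℕ}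
    (hf : ∀ n, Set.InjOn (f n) (Set.Iio n))
    (hlim : ∀ i, Tendsto (fun n => p (f n i)) atTop (𝓝 (r i))) : φ r ≤ φ p := by
  choose σ hσ using fun n => exists_perm_eqOn_Iio (hf n)
  refine le_of_lowerSemicontinuousOn_of_tendsto hlsc (u := fun n => p ∘ σ n) (l := atTop)
    (fun n => hp.comp_perm (σ n)) hr (tendsto_pi_nhds.2 fun i => ?_)
    fun n => (hsym p hp (σ n)).le
  refine (hlim i).congr' ((eventually_gt_atTop i).mono fun n hn => ?_)
  simp only [comp_apply, hσ n hn]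

lemma SymmetricOnPmf.apply_comp_injective (hsym : SymmetricOnPmf φ)
    (hlsc : LowerSemicontinuousOn φ {p | IsPmf p}) (hp : IsPmf p) {e : ℕ → ℕ} (he : Injective e)
    (hs : support p ⊆ Set.range e) : φ (p ∘ e) = φ p := by
  have hpe : IsPmf (p ∘ e) := hp.comp_injective he hs
  refine le_antisymm (hsym.le_of_tendsto_relabel hlsc hp hpe (f := fun _ => e)
    (fun _ => he.injOn) fun _ => tendsto_const_nhds) ?_
  -- Outcomes that `e` misses have mass zero; send them far out, where `p ∘ e` tends to zero.
  let M : ℕ → ℕ := fun n => n + ∑ x ∈ Finset.range n, invFun e x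
  have hM : ∀ {n x}, x < n → invFun e x < M n := fun {n x} hx =>
    lt_add_of_pos_of_le (pos_of_gt hx)
      (Finset.single_le_sum_of_canonicallyOrdered (f := invFun e) (Finset.mem_range.2 hx))
  refine hsym.le_of_tendsto_relabel hlsc hpe hp
    (f := fun n x => if x ∈ Set.range e then invFun e x else M n + x) (fun n x hx y hy hxy => ?_)
    fun x => ?_
  · dsimp only at hxy
    split_ifs at hxy with hxe hye hye
    · rw [← invFun_eq hxe, hxy, invFun_eq hye]
    · exact absurd hxy ((hM hx).trans_le (Nat.le_add_right _ _)).ne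
    · exact absurd hxy ((hM hy).trans_le (Nat.le_add_right _ _)).ne'
    · exact Nat.add_left_cancel hxy
  · by_cases hx : x ∈ Set.range e
    · simp only [comp_apply, hx, if_true, invFun_eq hx, tendsto_const_nhds]
    · simp only [hx, if_false, notMem_support.1 fun h => hx (hs h)]
      have hfar : Tendsto (fun n => M n + x) atTop atTop :=
        tendsto_atTop_mono (fun n => (Nat.le_add_right n _).trans (Nat.le_add_right _ x)) tendsto_id
      exact hpe.summable.tendsto_atTop_zero.comp hfar

lemma SymmetricOnPmf.apply_comp_succ (hsym : SymmetricOnPmf φ)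
    (hlsc : LowerSemicontinuousOn φ {p | IsPmf p}) (hp : IsPmf fun i => p (i + 1)) (h0 : p 0 = 0) :
    φ (fun i => p (i + 1)) = φ p := by
  have hsupp : support p ⊆ Set.range Nat.succ := fun i hi => by
    rcases i with _ | i
    · exact absurd h0 hi
    · exact ⟨i, rfl⟩
  have hsum : HasSum p 1 := by simpa [h0] using (hasSum_nat_add_iff 1).1 hp.hasSum
  have hp0 : ∀ i, 0 ≤ p i := fun i => i.casesOn h0.ge hp.1
  exact hsym.apply_comp_injective hlsc (isPmf_of_hasSum hp0 hsum) Nat.succ_injective hsupp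

end Relabelling

section DecreasingEnumeration

open Function

variable {α : Type*} {p : α → ℝ} {e : ℕ → α}

/-- `e` lists outcomes in order of decreasing mass, without repetition and without omitting any
outcome of positive mass, so that `p ∘ e` is the decreasing rearrangement of `p`. -/
structure IsDecEnum (p : α → ℝ) (e : ℕ → α) : Prop where
  injective : Injective e
  antitone : Antitone (p ∘ e)
  support_subset : support p ⊆ Set.range e

lemma exists_notMem_forall_le [Infinite α] (hp : Tendsto p cofinite (𝓝 0)) (h0 : ∀ x, 0 ≤ p x)
    (s : Finset α) : ∃ m ∉ s, ∀ x ∉ s, p x ≤ p m := by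
  by_cases hpos : ∃ x₀ ∉ s, 0 < p x₀
  · obtain ⟨x₀, hx₀, hx₀pos⟩ := hpos
    have hfin : {x | x ∉ s ∧ p x₀ ≤ p x}.Finite :=
      (eventually_cofinite.1 (hp.eventually_lt_const hx₀pos)).subset fun x hx => not_lt.2 hx.2
    obtain ⟨m, hm, hmax⟩ := Set.exists_max_image _ p hfin ⟨x₀, hx₀, le_rfl⟩
    exact ⟨m, hm.1, fun x hx => (le_total (p x₀) (p x)).elim (fun h => hmax x ⟨hx, h⟩)
      fun h => h.trans hm.2⟩
  · push Not at hpos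
    obtain ⟨m, hm⟩ := Infinite.exists_notMem_finset s
    exact ⟨m, hm, fun x hx => (hpos x hx).trans (h0 m)⟩

lemma exists_isDecEnum [Infinite α] (hp : Tendsto p cofinite (𝓝 0)) (h0 : ∀ x, 0 ≤ p x) :
    ∃ e, IsDecEnum p e := by
  choose m hm hmax using exists_notMem_forall_le hp h0
  let F : ℕ → Finset α := Nat.rec ∅ fun _ s => insert (m s) s
  have hF : Monotone F := monotone_nat_of_le_succ fun n => Finset.subset_insert _ _
  have hmem : ∀ {i j}, i < j → m (F i) ∈ F j := fun h => hF h (Finset.mem_insert_self _ _)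
  have hinj : Injective fun n => m (F n) := Injective.of_lt_imp_ne fun i j hij h =>
    hm (F j) (h ▸ hmem hij)
  refine ⟨fun n => m (F n), hinj, antitone_nat_of_succ_le fun n => ?_, fun x hx => ?_⟩
  · exact hmax _ _ fun h => hm _ (hF n.le_succ h)
  · by_contra hnot
    have hxF : ∀ n, x ∉ F n := by
      intro n
      induction n with
      | zero => exact Finset.notMem_empty x
      | succ n ih => exact fun h => (Finset.mem_insert.1 h).elim (fun h => hnot ⟨n, h.symm⟩) ih
    have hlim : Tendsto (fun n => p (m (F n))) atTop (𝓝 0) :=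
      (hp.comp hinj.tendsto_cofinite).congr' .rfl |>.mono_left Nat.cofinite_eq_atTop.ge
    exact hx ((ge_of_tendsto' hlim fun n => hmax _ x (hxF n)).antisymm (h0 x))

lemma sum_le_sum_range_of_antitone {f : ℕ → ℝ} (hf : Antitone f) (s : Finset ℕ) :
    ∑ i ∈ s, f i ≤ ∑ i ∈ Finset.range s.card, f i := by
  set t := Finset.range s.card
  have hcard : (s \ t).card = (t \ s).card := Finset.card_sdiff_comm (Finset.card_range _).symm
  have hdiff : ∑ i ∈ s \ t, f i ≤ ∑ i ∈ t \ s, f i := calc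
    _ ≤ (s \ t).card • f s.card := Finset.sum_le_card_nsmul _ _ _ fun i hi =>
      hf (by simpa [t] using (Finset.mem_sdiff.1 hi).2)
    _ = (t \ s).card • f s.card := by rw [hcard]
    _ ≤ _ := Finset.card_nsmul_le_sum _ _ _ fun i hi =>
      hf (Finset.mem_range.1 (Finset.mem_sdiff.1 hi).1).le
  rw [← Finset.sum_inter_add_sum_sdiff s t f, ← Finset.sum_inter_add_sum_sdiff t s f,
    Finset.inter_comm]
  gcongr

namespace IsDecEnum

lemma isPmf_comp (he : IsDecEnum p e) (hp : IsPmf p) : IsPmf (p ∘ e) :=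
  hp.comp_injective he.injective he.support_subset

lemma sum_le (he : IsDecEnum p e) (h0 : ∀ x, 0 ≤ p x) (s : Finset α) :
    ∑ x ∈ s, p x ≤ ∑ i ∈ Finset.range s.card, p (e i) := by
  set t := s.preimage e he.injective.injOn
  have ht : t.card ≤ s.card := Finset.card_le_card_of_injOn e
    (fun i hi => Finset.mem_preimage.1 hi) he.injective.injOn
  calc ∑ x ∈ s, p x
    _ = ∑ i ∈ t, p (e i) := (Finset.sum_preimage e s he.injective.injOn p fun x _ hx =>
      by_contra fun h => hx (he.support_subset h)).symm
    _ ≤ ∑ i ∈ Finset.range t.card, p (e i) := sum_le_sum_range_of_antitone he.antitone t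
    _ ≤ ∑ i ∈ Finset.range s.card, p (e i) := Finset.sum_le_sum_of_subset_of_nonneg
      (Finset.range_subset_range.2 ht) fun i _ _ => h0 _

lemma topSum_eq {p : ℕ → ℝ} {e : ℕ → ℕ} (he : IsDecEnum p e) (h0 : ∀ x, 0 ≤ p x) (k : ℕ) :
    topSum p k = ∑ i ∈ Finset.range k, p (e i) := by
  refine IsGreatest.csSup_eq
    ⟨⟨(Finset.range k).map ⟨e, he.injective⟩, by simp, by simp⟩, ?_⟩
  rintro _ ⟨s, rfl, rfl⟩
  exact he.sum_le h0 s

end IsDecEnum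

lemma sum_Icc_one_eq_sum_range (d : ℕ → ℝ) (k : ℕ) :
    ∑ i ∈ Finset.Icc 1 k, d i = ∑ i ∈ Finset.range k, d (i + 1) := by
  rw [Finset.range_eq_Ico, Finset.sum_Ico_add' d 0 k 1]
  rfl

namespace IsDecRearr

variable {Q d : ℕ → ℝ}

lemma antitone_succ (hd : IsDecRearr Q d) : Antitone fun i => d (i + 1) :=
  fun i _ hij => hd.2.1 _ _ i.succ_pos (Nat.succ_le_succ hij)

lemma sum_range_eq_topSum (hd : IsDecRearr Q d) (k : ℕ) :
    ∑ i ∈ Finset.range k, d (i + 1) = topSum Q k :=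
  sum_Icc_one_eq_sum_range d k ▸ hd.2.2 k

lemma exists_isDecEnum_succ_eq (hd : IsDecRearr Q d) (hQ : IsPmf Q) :
    ∃ e, IsDecEnum Q e ∧ (fun i => d (i + 1)) = Q ∘ e := by
  obtain ⟨e, he⟩ := exists_isDecEnum hQ.summable.tendsto_cofinite_zero hQ.1
  have hsum : ∀ k, ∑ i ∈ Finset.range k, d (i + 1) = ∑ i ∈ Finset.range k, Q (e i) := fun k => by
    rw [hd.sum_range_eq_topSum, he.topSum_eq hQ.1]
  refine ⟨e, he, funext fun i => ?_⟩
  simpa only [Function.comp_apply, Finset.sum_range_succ, hsum i, add_right_inj] using hsum (i + 1)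

lemma isPmf_succ (hd : IsDecRearr Q d) (hQ : IsPmf Q) : IsPmf fun i => d (i + 1) := by
  obtain ⟨e, he, hde⟩ := hd.exists_isDecEnum_succ_eq hQ
  exact hde ▸ he.isPmf_comp hQ

end IsDecRearr

end DecreasingEnumeration

section SchurConcavity

open Function Finset

/-- The vector obtained from `r` by moving mass `δ` from outcome `i` to outcome `j`; for
`0 ≤ δ ≤ r i - r j` this is a Robin Hood transfer (T-transform) in the sense of majorization. -/
def transfer {α : Type*} (r : α → ℝ) (i j : α) (δ : ℝ) : α → ℝ :=
  r - Pi.single i δ + Pi.single j δ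

section Transfer

variable {α : Type*} {r : α → ℝ} {i j x : α} {δ : ℝ}

lemma transfer_apply_left (hij : i ≠ j) : transfer r i j δ i = r i - δ := by
  simp [transfer, hij]

lemma transfer_apply_right (hij : i ≠ j) : transfer r i j δ j = r j + δ := by
  simp [transfer, hij.symm]

lemma transfer_apply_of_ne (hi : x ≠ i) (hj : x ≠ j) : transfer r i j δ x = r x := by
  simp [transfer, hi, hj]

lemma exists_transfer_eq_convexComb_swap (hij : i ≠ j) (hδ0 : 0 ≤ δ) (hδ : δ ≤ r i - r j) :
    ∃ l : ℝ, 0 ≤ l ∧ l ≤ 1 ∧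
      transfer r i j δ = fun x => l * r x + (1 - l) * (r ∘ Equiv.swap i j) x := by
  have hdiv : δ / (r i - r j) * (r i - r j) = δ := div_mul_cancel_of_imp fun h => by linarith
  refine ⟨1 - δ / (r i - r j), ?_, ?_, funext fun x => ?_⟩
  · linarith [div_le_one_of_le₀ hδ (hδ0.trans hδ)]
  · linarith [div_nonneg hδ0 (hδ0.trans hδ)]
  · rcases eq_or_ne x i with rfl | hi
    · simp only [transfer_apply_left hij, comp_apply, Equiv.swap_apply_left]
      linarith
    rcases eq_or_ne x j with rfl | hj
    · simp only [transfer_apply_right hij, comp_apply, Equiv.swap_apply_right]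
      linarith
    · simp only [transfer_apply_of_ne hi hj, comp_apply, Equiv.swap_apply_of_ne_of_ne hi hj]
      ring

lemma isPmf_transfer (hr : IsPmf r) (hij : i ≠ j) (hδ0 : 0 ≤ δ) (hδ : δ ≤ r i - r j) :
    IsPmf (transfer r i j δ) := by
  obtain ⟨l, hl0, hl1, h⟩ := exists_transfer_eq_convexComb_swap hij hδ0 hδ
  exact h ▸ hr.convexComb (hr.comp_perm _) hl0 hl1

lemma ConcaveOnPmf.le_transfer {φ : (α → ℝ) → ENNReal} (hconc : ConcaveOnPmf φ)
    (hsym : SymmetricOnPmf φ) (hr : IsPmf r) (hij : i ≠ j) (hδ0 : 0 ≤ δ) (hδ : δ ≤ r i - r j) :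
    φ r ≤ φ (transfer r i j δ) := by
  obtain ⟨l, hl0, hl1, h⟩ := exists_transfer_eq_convexComb_swap hij hδ0 hδ
  calc φ r
    _ = ENNReal.ofReal l * φ r + ENNReal.ofReal (1 - l) * φ (r ∘ Equiv.swap i j) := by
      rw [hsym r hr, ← add_mul, ← ENNReal.ofReal_add hl0 (sub_nonneg.2 hl1), add_sub_cancel,
        ENNReal.ofReal_one, one_mul]
    _ ≤ φ (transfer r i j δ) := h ▸ hconc _ _ hr (hr.comp_perm _) l hl0 hl1

end Transfer

variable {p r : ℕ → ℝ}

lemma sum_range_transfer (r : ℕ → ℝ) (i j : ℕ) (δ : ℝ) (k : ℕ) :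
    ∑ x ∈ range k, transfer r i j δ x =
      ∑ x ∈ range k, r x - (if i < k then δ else 0) + if j < k then δ else 0 := by
  simp only [transfer, Pi.add_apply, Pi.sub_apply, sum_add_distrib, sum_sub_distrib,
    sum_pi_single', mem_range]

lemma exists_lt_surplus_deficit (hp : IsPmf p) (hr : IsPmf r)
    (hdom : ∀ k, ∑ x ∈ range k, p x ≤ ∑ x ∈ range k, r x) (hne : r ≠ p) :
    ∃ i j, i < j ∧ p i < r i ∧ r j < p j ∧ ∀ x < j, p x ≤ r x := by
  have hdef : ∃ j, r j < p j := by
    by_contra! h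
    exact hne (hp.eq_of_le hr h).symm
  obtain ⟨i, hi, hlt⟩ := exists_lt_of_sum_lt (s := range (Nat.find hdef)) (f := p) (g := r) (by
    have := hdom (Nat.find hdef + 1)
    rw [sum_range_succ, sum_range_succ] at this
    linarith [Nat.find_spec hdef])
  exact ⟨i, _, mem_range.1 hi, hlt, Nat.find_spec hdef, fun x hx => not_lt.1 (Nat.find_min hdef hx)⟩

lemma sum_range_le_sum_range_transfer {i j k : ℕ} {δ : ℝ}
    (hdom : ∀ k, ∑ x ∈ range k, p x ≤ ∑ x ∈ range k, r x) (hij : i < j)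
    (hle : ∀ x < j, p x ≤ r x) (hδ : δ ≤ r i - p i) :
    ∑ x ∈ range k, p x ≤ ∑ x ∈ range k, transfer r i j δ x := by
  rw [sum_range_transfer]
  by_cases hjk : j < k
  · simp [hjk, hij.trans hjk, hdom k]
  by_cases hik : i < k
  · have hsurplus : r i - p i ≤ ∑ x ∈ range k, (r x - p x) :=
      single_le_sum (f := fun x => r x - p x)
        (fun x hx => sub_nonneg.2 (hle x ((mem_range.1 hx).trans_le (not_lt.1 hjk))))
        (mem_range.2 hik)
    rw [sum_sub_distrib] at hsurplus
    simp only [hik, hjk, if_true, if_false]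
    linarith
  · simp [hik, hjk, hdom k]

variable {φ : (ℕ → ℝ) → ENNReal}

/-- Each transfer makes `r` agree with `p` at one more outcome. -/
lemma ConcaveOnPmf.le_of_sum_range_le_of_eqOn_compl (hconc : ConcaveOnPmf φ)
    (hsym : SymmetricOnPmf φ) (hp : IsPmf p) (hpa : Antitone p) (s : Finset ℕ) :
    ∀ {r : ℕ → ℝ}, IsPmf r → (∀ k, ∑ x ∈ range k, p x ≤ ∑ x ∈ range k, r x) →
      (∀ x ∉ s, r x = p x) → φ r ≤ φ p := by
  induction s using Finset.strongInduction with
  | H s ih =>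
    intro r hr hdom hs
    rcases eq_or_ne r p with rfl | hne
    · exact le_rfl
    obtain ⟨i, j, hij, hi, hj, hle⟩ := exists_lt_surplus_deficit hp hr hdom hne
    set δ := min (r i - p i) (p j - r j) with hδdef
    have hδ0 : 0 ≤ δ := le_min (sub_nonneg.2 hi.le) (sub_nonneg.2 hj.le)
    have hδi : δ ≤ r i - p i := min_le_left _ _
    have hδ : δ ≤ r i - r j := by linarith [hpa hij.le]
    have hfix : ∃ y ∈ s, transfer r i j δ y = p y := by
      rcases min_choice (r i - p i) (p j - r j) with hmin | hmin
      · refine ⟨i, by_contra fun h => hi.ne' (hs i h), ?_⟩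
        rw [transfer_apply_left hij.ne, hδdef, hmin, sub_sub_cancel]
      · refine ⟨j, by_contra fun h => hj.ne (hs j h), ?_⟩
        rw [transfer_apply_right hij.ne, hδdef, hmin, add_sub_cancel]
    obtain ⟨y, hys, hy⟩ := hfix
    refine (hconc.le_transfer hsym hr hij.ne hδ0 hδ).trans (ih _ (erase_ssubset hys)
      (isPmf_transfer hr hij.ne hδ0 hδ) (fun k => sum_range_le_sum_range_transfer hdom hij hle hδi)
      fun x hx => ?_)
    rcases eq_or_ne x y with rfl | hxy
    · exact hy
    have hxs : x ∉ s := fun h => hx (mem_erase.2 ⟨hxy, h⟩)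
    rw [transfer_apply_of_ne, hs x hxs]
    · rintro rfl
      exact hi.ne' (hs x hxs)
    · rintro rfl
      exact hj.ne (hs x hxs)

lemma monotone_sum_range {f : ℕ → ℝ} (hf : ∀ x, 0 ≤ f x) :
    Monotone fun k => ∑ x ∈ range k, f x :=
  fun _ _ h => sum_le_sum_of_subset_of_nonneg (range_mono h) fun x _ _ => hf x

lemma exists_tendsto_of_sum_range_le (hp : IsPmf p) (hr : IsPmf r)
    (hdom : ∀ k, ∑ x ∈ range k, p x ≤ ∑ x ∈ range k, r x) :
    ∃ u : ℕ → ℕ → ℝ, (∀ n, IsPmf (u n)) ∧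
      (∀ n k, ∑ x ∈ range k, p x ≤ ∑ x ∈ range k, u n x) ∧
      (∀ n, ∀ x ∉ range n, u n x = p x) ∧ Tendsto u atTop (𝓝 r) := by
  set P := fun k => ∑ x ∈ range k, p x with hP
  set R := fun k => ∑ x ∈ range k, r x with hR
  have hPmono : Monotone P := monotone_sum_range hp.1
  have hRmono : Monotone R := monotone_sum_range hr.1
  have hPlim : Tendsto P atTop (𝓝 1) := hp.hasSum.tendsto_sum_nat
  -- The partial sums of the `n`th approximant: those of `r`, capped at `P n`, up to time `n`,
  -- and those of `p` afterwards.
  let S : ℕ → ℕ → ℝ := fun n k => max (P k) (min (R k) (P n))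
  have hS : ∀ {n k}, n ≤ k → S n k = P k := fun h =>
    max_eq_left ((min_le_right _ _).trans (hPmono h))
  have hSmono : ∀ n, Monotone (S n) := fun n a b h =>
    max_le_max (hPmono h) (min_le_min_right _ (hRmono h))
  have hSlim : ∀ k, Tendsto (fun n => S n k) atTop (𝓝 (R k)) := fun k => by
    have h := (tendsto_const_nhds (x := P k)).max ((tendsto_const_nhds (x := R k)).min hPlim)
    rwa [min_eq_left (hr.sum_le_one _), max_eq_right (hdom k)] at h
  have hsum : ∀ n k, ∑ x ∈ range k, (S n (x + 1) - S n x) = S n k := fun n k => by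
    simp [sum_range_sub (S n), S, P, R, Finset.sum_nonneg fun x _ => hp.1 x]
  refine ⟨fun n x => S n (x + 1) - S n x, fun n => ?_, fun n k => ?_, fun n x hx => ?_, ?_⟩
  · have hnonneg : ∀ x, 0 ≤ S n (x + 1) - S n x := fun x => sub_nonneg.2 (hSmono n x.le_succ)
    refine isPmf_of_hasSum hnonneg ((hasSum_iff_tendsto_nat_of_nonneg hnonneg 1).2 ?_)
    refine hPlim.congr' ((eventually_ge_atTop n).mono fun k hk => ?_)
    exact ((hsum n k).trans (hS hk)).symm
  · exact (le_max_left _ _).trans_eq (hsum n k).symm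
  · have hnx : n ≤ x := by simpa using hx
    simp only [hS hnx, hS (hnx.trans x.le_succ), hP, sum_range_succ, add_sub_cancel_left]
  · refine tendsto_pi_nhds.2 fun x => ?_
    simpa only [hR, sum_range_succ, add_sub_cancel_left] using (hSlim (x + 1)).sub (hSlim x)

lemma ConcaveOnPmf.le_of_sum_range_le (hconc : ConcaveOnPmf φ) (hsym : SymmetricOnPmf φ)
    (hlsc : LowerSemicontinuousOn φ {p | IsPmf p}) (hp : IsPmf p) (hpa : Antitone p)
    (hr : IsPmf r) (hdom : ∀ k, ∑ x ∈ range k, p x ≤ ∑ x ∈ range k, r x) : φ r ≤ φ p := by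
  obtain ⟨u, hu, hudom, hueq, hulim⟩ := exists_tendsto_of_sum_range_le hp hr hdom
  exact le_of_lowerSemicontinuousOn_of_tendsto hlsc hu hr hulim fun n =>
    hconc.le_of_sum_range_le_of_eqOn_compl hsym hp hpa (range n) (hu n) (hudom n) (hueq n)

end SchurConcavity

section Levelling

open Finset

variable {f r : ℕ → ℝ} {L k : ℕ} {v w : ℝ}

/-- The sequence `f` with its first `L` terms raised to at least `v` and its remaining terms cut
down to at most `w`. The Fano-type-1 distribution has this shape: flattening a decreasing head to
its common value is the same as raising it to a level, and likewise for the tail. -/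
def levelled (f : ℕ → ℝ) (L : ℕ) (v w : ℝ) (i : ℕ) : ℝ :=
  if i < L then max (f i) v else min (f i) w

lemma levelled_of_lt {i : ℕ} (h : i < L) : levelled f L v w i = max (f i) v :=
  if_pos h

lemma levelled_of_le {i : ℕ} (h : L ≤ i) : levelled f L v w i = min (f i) w :=
  if_neg h.not_gt

lemma antitone_levelled (hf : Antitone f) : Antitone (levelled f L v w) := by
  intro i j hij
  rcases lt_or_ge j L with hj | hj
  · simpa only [levelled_of_lt hj, levelled_of_lt (hij.trans_lt hj)] using
      max_le_max_right v (hf hij)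
  rcases lt_or_ge i L with hi | hi
  · rw [levelled_of_le hj, levelled_of_lt hi]
    exact (min_le_left _ _).trans ((hf hij).trans (le_max_left _ _))
  · simpa only [levelled_of_le hj, levelled_of_le hi] using min_le_min_right w (hf hij)

lemma levelled_nonneg (hf : ∀ i, 0 ≤ f i) (hw : 0 ≤ w) (i : ℕ) : 0 ≤ levelled f L v w i := by
  rcases lt_or_ge i L with hi | hi
  · exact levelled_of_lt hi ▸ le_max_of_le_left (hf i)
  · exact levelled_of_le hi ▸ le_min (hf i) hw

lemma sum_range_levelled_le_of_forall_le (hf : Antitone f)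
    (hdom : ∀ k, ∑ i ∈ range k, f i ≤ ∑ i ∈ range k, r i) (hk : k ≤ L)
    (hv : ∀ i < k, v ≤ r i) : ∑ i ∈ range k, levelled f L v w i ≤ ∑ i ∈ range k, r i := by
  induction k with
  | zero => simp
  | succ k ih =>
    rcases le_or_gt v (f k) with hvf | hvf
    · refine (sum_le_sum fun i hi => ?_).trans (hdom (k + 1))
      have hik : i < k + 1 := mem_range.1 hi
      rw [levelled_of_lt (hik.trans_le hk), max_eq_left (hvf.trans (hf (Nat.lt_succ_iff.1 hik)))]
    · rw [sum_range_succ, sum_range_succ, levelled_of_lt hk, max_eq_right hvf.le]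
      exact add_le_add (ih (Nat.le_of_succ_le hk) fun i hi => hv i (hi.trans k.lt_succ_self))
        (hv k k.lt_succ_self)

lemma sum_range_levelled_le_of_le (hf : Antitone f) (hr : Antitone r)
    (hdom : ∀ k, ∑ i ∈ range k, f i ≤ ∑ i ∈ range k, r i)
    (hhead : ∑ i ∈ range L, levelled f L v w i ≤ ∑ i ∈ range L, r i) (hk : k ≤ L) :
    ∑ i ∈ range k, levelled f L v w i ≤ ∑ i ∈ range k, r i := by
  by_cases hv : ∀ i < k, v ≤ r i
  · exact sum_range_levelled_le_of_forall_le hf hdom hk hv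
  push Not at hv
  obtain ⟨i, hik, hi⟩ := hv
  have hrest : ∑ x ∈ Ico k L, r x ≤ ∑ x ∈ Ico k L, levelled f L v w x :=
    sum_le_sum fun x hx => by
      rw [levelled_of_lt (mem_Ico.1 hx).2]
      exact (hr (hik.le.trans (mem_Ico.1 hx).1)).trans (hi.le.trans (le_max_right _ _))
  linarith [sum_range_add_sum_Ico (levelled f L v w) hk, sum_range_add_sum_Ico r hk]

lemma hasSum_of_forall_ge_eq {f g : ℕ → ℝ} {a : ℝ} {m : ℕ} (hf : HasSum f a)
    (h : ∀ i, m ≤ i → g i = f i) : HasSum g (a + (∑ i ∈ range m, g i - ∑ i ∈ range m, f i)) := by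
  have hdiff : HasSum (fun i => g i - f i) (∑ i ∈ range m, (g i - f i)) :=
    hasSum_sum_of_ne_finset_zero fun i hi => sub_eq_zero.2 (h i (by simpa using hi))
  simpa only [add_sub_cancel, sum_sub_distrib] using hf.add hdiff

lemma sum_range_levelled_le_of_ge (hf : Antitone f) (hfp : IsPmf f) (hr : Antitone r)
    (hr0 : ∀ i, 0 ≤ r i) (hdom : ∀ k, ∑ i ∈ range k, f i ≤ ∑ i ∈ range k, r i)
    (hhead : ∑ i ∈ range L, levelled f L v w i ≤ ∑ i ∈ range L, r i)
    (hsum : HasSum (levelled f L v w) 1) (hk : L ≤ k) :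
    ∑ i ∈ range k, levelled f L v w i ≤ ∑ i ∈ range k, r i := by
  by_cases hw : ∀ i ∈ Ico L k, w ≤ r i
  · have hmid : ∑ x ∈ Ico L k, levelled f L v w x ≤ ∑ x ∈ Ico L k, r x :=
      sum_le_sum fun x hx => by
        rw [levelled_of_le (mem_Ico.1 hx).1]
        exact (min_le_right _ _).trans (hw x hx)
    linarith [sum_range_add_sum_Ico (levelled f L v w) hk, sum_range_add_sum_Ico r hk]
  push Not at hw
  obtain ⟨i, hi, hiw⟩ := hw
  have hrw : ∀ x, k ≤ x → r x ≤ w := fun x hx =>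
    (hr ((mem_Ico.1 hi).2.le.trans hx)).trans hiw.le
  -- From the first index `m ≥ k` with `f m ≤ w` on, levelling changes nothing.
  have hex : ∃ m, k ≤ m ∧ f m ≤ w := ((eventually_ge_atTop k).and
    (hfp.summable.tendsto_atTop_zero.eventually_le_const ((hr0 i).trans_lt hiw))).exists
  set m := Nat.find hex
  have hkm : k ≤ m := (Nat.find_spec hex).1
  have hm : ∑ x ∈ range m, levelled f L v w x = ∑ x ∈ range m, f x := by
    have h := (hasSum_of_forall_ge_eq hfp.hasSum fun x (hx : m ≤ x) => by
      rw [levelled_of_le (hk.trans (hkm.trans hx)),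
        min_eq_left ((hf hx).trans (Nat.find_spec hex).2)]).unique hsum
    linarith
  have hmid : ∑ x ∈ Ico k m, r x ≤ ∑ x ∈ Ico k m, levelled f L v w x :=
    sum_le_sum fun x hx => by
      obtain ⟨hkx, hxm⟩ := mem_Ico.1 hx
      have hwf : w < f x := not_le.1 fun h => Nat.find_min hex hxm ⟨hkx, h⟩
      rw [levelled_of_le (hk.trans hkx), min_eq_right hwf.le]
      exact hrw x hkx
  linarith [sum_range_add_sum_Ico (levelled f L v w) hkm, sum_range_add_sum_Ico r hkm, hdom m]

end Levelling

section FanoType1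

open Finset

variable {d : ℕ → ℝ} {L b i j : ℕ} {ε : ℝ}

lemma fanoV_succ_mul (hj : j < L) :
    fanoV d L ε (j + 1) * ((L : ℝ) - j) = 1 - ε - ∑ i ∈ range j, d (i + 1) := by
  have hpos : (0 : ℝ) < (L : ℝ) - j := sub_pos.2 (Nat.cast_lt.2 hj)
  rw [fanoV, if_pos (Nat.succ_le_of_lt hj), Nat.add_sub_cancel, sum_Icc_one_eq_sum_range,
    Nat.cast_succ, sub_add_eq_sub_sub, sub_add_cancel, div_mul_cancel₀ _ hpos.ne']

lemma fanoV_succ_le_iff (hj : j < L) : fanoV d L ε (j + 1) ≤ d (j + 1) ↔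
    1 - ε ≤ ∑ i ∈ range (j + 1), d (i + 1) + ((L : ℝ) - (j + 1)) * d (j + 1) := by
  have hpos : (0 : ℝ) < (L : ℝ) - j := sub_pos.2 (Nat.cast_lt.2 hj)
  rw [← mul_le_mul_iff_left₀ hpos, fanoV_succ_mul hj, sum_range_succ]
  constructor <;> intro h <;> linarith

lemma fanoW_mul (hb : L < b) :
    fanoW d L ε b * ((b : ℝ) - L) = ∑ i ∈ range b, d (i + 1) - (1 - ε) := by
  have hpos : (0 : ℝ) < (b : ℝ) - L := sub_pos.2 (Nat.cast_lt.2 hb)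
  rw [fanoW, if_neg hb.ne', sum_Icc_one_eq_sum_range, div_mul_cancel₀ _ hpos.ne']

lemma fanoW_succ_lt_iff (hb : L ≤ b) : fanoW d L ε (b + 1) < d (b + 1) ↔
    ∑ i ∈ range b, d (i + 1) - (1 - ε) < ((b : ℝ) - L) * d (b + 1) := by
  have hpos : (0 : ℝ) < ((b + 1 : ℕ) : ℝ) - L := sub_pos.2 (Nat.cast_lt.2 (Nat.lt_succ_iff.2 hb))
  rw [← mul_lt_mul_iff_left₀ hpos, fanoW_mul (Nat.lt_succ_iff.2 hb), sum_range_succ]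
  push_cast
  constructor <;> intro h <;> linarith

lemma exists_fanoJ_eq_succ (hda : Antitone fun i => d (i + 1)) (hdp : IsPmf fun i => d (i + 1))
    (hL : 1 ≤ L) : ∃ a ≤ L, fanoJ d L ε = a + 1 ∧
      (∀ i < a, fanoV d L ε (i + 1) ≤ d (i + 1)) ∧ d (a + 1) < fanoV d L ε (a + 1) := by
  have hdL : d (L + 1) < 1 := by
    have hpair : d 1 + d (L + 1) ≤ 1 := by
      simpa [sum_pair (Nat.ne_of_lt hL)] using hdp.sum_le_one {0, L}
    linarith [hda (Nat.zero_le L)]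
  have hmem : L + 1 ∈ {j : ℕ | 1 ≤ j ∧ d j < fanoV d L ε j} :=
    ⟨Nat.succ_pos L, by rwa [fanoV, if_neg L.lt_succ_self.not_ge]⟩
  have hJ := Nat.sInf_mem ⟨_, hmem⟩
  obtain ⟨a, ha⟩ := Nat.exists_eq_succ_of_ne_zero (Nat.one_le_iff_ne_zero.1 hJ.1)
  refine ⟨a, Nat.succ_le_succ_iff.1 (ha ▸ Nat.sInf_le hmem), ha,
    fun i hi => not_lt.1 fun h => ?_, ?_⟩
  · exact Nat.notMem_of_lt_sInf ((Nat.succ_lt_succ hi).trans_eq ha.symm)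
      (⟨Nat.succ_pos i, h⟩ : i + 1 ∈ {j : ℕ | 1 ≤ j ∧ d j < fanoV d L ε j})
  · rw [ha] at hJ
    exact hJ.2

lemma exists_fanoType1_eq_max (hda : Antitone fun i => d (i + 1))
    (hdp : IsPmf fun i => d (i + 1)) (hL : 1 ≤ L) (hε : ∑ i ∈ range L, d (i + 1) ≤ 1 - ε) :
    ∃ v, (∀ i < L, fanoType1 d L ε (i + 1) = max (d (i + 1)) v) ∧
      ∑ i ∈ range L, fanoType1 d L ε (i + 1) = 1 - ε := by
  obtain ⟨a, haL, hJ, hbelow, hat⟩ := exists_fanoJ_eq_succ (ε := ε) hda hdp hL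
  have hhead : ∀ i < a, fanoType1 d L ε (i + 1) = d (i + 1) := fun i hi => by
    rw [fanoType1, hJ, if_pos (Nat.succ_lt_succ hi)]
  have hbound : ∀ n, n + 1 = a →
      1 - ε ≤ ∑ i ∈ range a, d (i + 1) + ((L : ℝ) - a) * d (n + 1) := by
    rintro n rfl
    exact_mod_cast (fanoV_succ_le_iff haL).1 (hbelow n n.lt_succ_self)
  rcases haL.eq_or_lt with rfl | haL
  · obtain ⟨n, rfl⟩ := Nat.exists_eq_succ_of_ne_zero (Nat.one_le_iff_ne_zero.1 hL)
    refine ⟨d (n + 1), fun i hi => ?_, ?_⟩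
    · rw [hhead i hi, max_eq_left (hda (Nat.lt_succ_iff.1 hi))]
    · rw [sum_congr rfl fun i hi => hhead i (mem_range.1 hi)]
      exact hε.antisymm (by simpa using hbound n rfl)
  · have hmid : ∀ i, a ≤ i → i < L → fanoType1 d L ε (i + 1) = fanoV d L ε (a + 1) :=
      fun i hai hiL => by rw [fanoType1, hJ, if_neg (by lia), if_pos (Nat.succ_le_of_lt hiL)]
    refine ⟨fanoV d L ε (a + 1), fun i hiL => ?_, ?_⟩
    · rcases lt_or_ge i a with hia | hai
      · rw [hhead i hia, max_eq_left]
        obtain ⟨n, rfl⟩ := Nat.exists_eq_succ_of_ne_zero (Nat.ne_zero_of_lt hia)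
        have hpos : (0 : ℝ) < (L : ℝ) - (n + 1 : ℕ) := sub_pos.2 (Nat.cast_lt.2 haL)
        refine le_trans ?_ (hda (Nat.lt_succ_iff.1 hia))
        rw [← mul_le_mul_iff_left₀ hpos, fanoV_succ_mul haL]
        linarith [hbound n rfl]
      · rw [hmid i hai hiL, max_eq_right ((hda hai).trans hat.le)]
    · rw [← sum_range_add_sum_Ico _ haL.le, sum_congr rfl fun i hi => hhead i (mem_range.1 hi),
        sum_congr rfl fun i hi => hmid i (mem_Ico.1 hi).1 (mem_Ico.1 hi).2, sum_const,
        Nat.card_Ico, nsmul_eq_mul, Nat.cast_sub haL.le, mul_comm, fanoV_succ_mul haL]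
      ring

lemma fanoJ_le_succ (hda : Antitone fun i => d (i + 1)) (hdp : IsPmf fun i => d (i + 1))
    (hL : 1 ≤ L) : fanoJ d L ε ≤ L + 1 := by
  obtain ⟨a, haL, hJ, -⟩ := exists_fanoJ_eq_succ (ε := ε) hda hdp hL
  exact hJ.trans_le (Nat.succ_le_succ haL)

lemma fanoType1_zero (hda : Antitone fun i => d (i + 1)) (hdp : IsPmf fun i => d (i + 1))
    (hL : 1 ≤ L) : fanoType1 d L ε 0 = d 0 := by
  obtain ⟨a, -, hJ, -⟩ := exists_fanoJ_eq_succ (ε := ε) hda hdp hL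
  rw [fanoType1, hJ, if_pos a.succ_pos]

lemma fanoType1_succ_of_le (hJ : fanoJ d L ε ≤ L + 1) (hi : L ≤ i) :
    fanoType1 d L ε (i + 1) = if ((i + 1 : ℕ) : ℕ∞) ≤ fanoK d L ε then
      (if fanoK d L ε = ⊤ then 0 else fanoW d L ε (fanoK d L ε).toNat) else d (i + 1) := by
  rw [fanoType1, if_neg (by lia), if_neg (by lia)]

lemma fanoK_eq_coe_spec (hd : 0 ≤ d L) (hK : fanoK d L ε = b) :
    L ≤ b ∧ fanoW d L ε b < d b ∧ d (b + 1) ≤ fanoW d L ε (b + 1) := by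
  set S := {k : ℕ∞ | ∃ n : ℕ, k = (n : ℕ∞) ∧ L ≤ n ∧ fanoW d L ε n < d n}
  have hLS : (L : ℕ∞) ∈ S := ⟨L, rfl, le_rfl, by rw [fanoW, if_pos rfl]; linarith⟩
  have : Nonempty S := ⟨⟨_, hLS⟩⟩
  have hmem : sSup S ∈ S :=
    ENat.sSup_mem_of_nonempty_of_lt_top (hK.trans_lt (ENat.natCast_lt_top b))
  have hub : ∀ k ∈ S, k ≤ b := fun k hk => hK ▸ le_sSup hk
  obtain ⟨n, hn, hLn, hlt⟩ := hmem
  obtain rfl : b = n := Nat.cast_injective (hK.symm.trans hn)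
  exact ⟨hLn, hlt, not_lt.1 fun h => absurd (Nat.cast_le.1 (hub _ ⟨b + 1, rfl, by lia, h⟩))
    b.lt_succ_self.not_ge⟩

lemma exists_lt_fanoW_lt_of_fanoK_eq_top (hK : fanoK d L ε = ⊤) (N : ℕ) :
    ∃ n, N < n ∧ L ≤ n ∧ fanoW d L ε n < d n := by
  obtain ⟨_, ⟨n, rfl, hLn, hn⟩, hN⟩ := sSup_eq_top.1 hK N (ENat.natCast_lt_top N)
  exact ⟨n, Nat.cast_lt.1 hN, hLn, hn⟩

lemma one_le_of_fanoK_eq_top (hda : Antitone fun i => d (i + 1))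
    (hdp : IsPmf fun i => d (i + 1)) (hK : fanoK d L ε = ⊤) : 1 ≤ 1 - ε := by
  have hpartial : ∀ m, ∑ i ∈ range m, d (i + 1) ≤ 1 - ε := by
    intro m
    have hlim : Tendsto (fun n => 1 - ε + ((m : ℝ) - L) * d (n + 1)) atTop (𝓝 (1 - ε)) := by
      simpa using (hdp.summable.tendsto_atTop_zero.const_mul ((m : ℝ) - L)).const_add (1 - ε)
    refine ge_of_tendsto_of_frequently hlim (frequently_atTop.2 fun N => ?_)
    obtain ⟨k, hk, hLk, hlt⟩ := exists_lt_fanoW_lt_of_fanoK_eq_top hK (max N (max L m))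
    obtain ⟨n, rfl⟩ := Nat.exists_eq_succ_of_ne_zero (Nat.ne_zero_of_lt hk)
    have hmn : m ≤ n := by lia
    refine ⟨n, by lia, ?_⟩
    have hblock : ((n : ℝ) - m) * d (n + 1) ≤ ∑ i ∈ Ico m n, d (i + 1) := by
      simpa [Nat.cast_sub hmn] using card_nsmul_le_sum (Ico m n) (fun i => d (i + 1)) (d (n + 1))
        fun i hi => hda (mem_Ico.1 hi).2.le
    have hW := (fanoW_succ_lt_iff (by lia)).1 hlt
    rw [← sum_range_add_sum_Ico _ hmn] at hW
    linarith
  exact le_of_tendsto' hdp.hasSum.tendsto_sum_nat hpartial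

lemma exists_fanoType1_eq_of_fanoK_eq_coe (hda : Antitone fun i => d (i + 1)) (hdL : 0 ≤ d L)
    (hJ : fanoJ d L ε ≤ L + 1) (hε : ∑ i ∈ range L, d (i + 1) ≤ 1 - ε)
    (hK : fanoK d L ε = b) :
    L ≤ b ∧ ∃ w, w * ((b : ℝ) - L) = ∑ i ∈ range b, d (i + 1) - (1 - ε) ∧ d (b + 1) ≤ w ∧
      ∀ i, L ≤ i → i < b → fanoType1 d L ε (i + 1) = w ∧ w ≤ d (i + 1) := by
  obtain ⟨hLb, hlt, hle⟩ := fanoK_eq_coe_spec hdL hK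
  have hchord := not_lt.1 (mt (fanoW_succ_lt_iff hLb).2 hle.not_gt)
  refine ⟨hLb, ?_⟩
  rcases hLb.eq_or_lt with rfl | hLb
  · refine ⟨d (L + 1), ?_, le_rfl, fun i hLi hiL => absurd hLi hiL.not_ge⟩
    rw [sub_self, zero_mul] at hchord
    linarith
  · have hpos : (0 : ℝ) < (b : ℝ) - L := sub_pos.2 (Nat.cast_lt.2 hLb)
    refine ⟨fanoW d L ε b, fanoW_mul hLb, ?_, fun i hLi hib => ⟨?_, ?_⟩⟩
    · rwa [← mul_le_mul_iff_left₀ hpos, fanoW_mul hLb, mul_comm]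
    · rw [fanoType1_succ_of_le hJ hLi, hK, if_pos (Nat.cast_le.2 (Nat.succ_le_of_lt hib)),
        if_neg (ENat.natCast_ne_top b), ENat.toNat_natCast]
    · obtain ⟨n, rfl⟩ := Nat.exists_eq_succ_of_ne_zero (Nat.ne_zero_of_lt hib)
      exact hlt.le.trans (hda (Nat.lt_succ_iff.1 hib))

lemma exists_fanoType1_eq_min (hda : Antitone fun i => d (i + 1))
    (hdp : IsPmf fun i => d (i + 1)) (hL : 1 ≤ L) (hε0 : 0 ≤ ε)
    (hε : ∑ i ∈ range L, d (i + 1) ≤ 1 - ε)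
    (hhead : ∑ i ∈ range L, fanoType1 d L ε (i + 1) = 1 - ε) :
    ∃ w, 0 ≤ w ∧ (∀ i, L ≤ i → fanoType1 d L ε (i + 1) = min (d (i + 1)) w) ∧
      HasSum (fun i => fanoType1 d L ε (i + 1)) 1 := by
  have hJ : fanoJ d L ε ≤ L + 1 := fanoJ_le_succ hda hdp hL
  rcases eq_or_ne (fanoK d L ε) ⊤ with hK | hK
  · have hzero : ∀ i, L ≤ i → fanoType1 d L ε (i + 1) = 0 := fun i hi => by
      simp [fanoType1_succ_of_le hJ hi, hK]
    have hsum : HasSum (fun i => fanoType1 d L ε (i + 1)) (1 - ε) :=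
      hhead ▸ hasSum_sum_of_ne_finset_zero fun i hi => hzero i (by simpa using hi)
    refine ⟨0, le_rfl, fun i hi => by rw [hzero i hi, min_eq_right (hdp.1 i)], ?_⟩
    rwa [(sub_le_self 1 hε0).antisymm (one_le_of_fanoK_eq_top hda hdp hK)] at hsum
  obtain ⟨b, hb⟩ := ENat.ne_top_iff_exists.1 hK
  have hdL : 0 ≤ d L := by
    obtain ⟨n, rfl⟩ := Nat.exists_eq_succ_of_ne_zero (Nat.one_le_iff_ne_zero.1 hL)
    exact hdp.1 n
  obtain ⟨hLb, w, hwb, hbw, hmid⟩ := exists_fanoType1_eq_of_fanoK_eq_coe hda hdL hJ hε hb.symm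
  have hbeyond : ∀ i, b ≤ i → fanoType1 d L ε (i + 1) = d (i + 1) := fun i hi => by
    rw [fanoType1_succ_of_le hJ (hLb.trans hi), ← hb,
      if_neg (Nat.cast_le.not.2 (Nat.lt_succ_iff.2 hi).not_ge)]
  refine ⟨w, (hdp.1 b).trans hbw, fun i hi => ?_, ?_⟩
  · rcases lt_or_ge i b with hib | hbi
    · rw [(hmid i hi hib).1, min_eq_right (hmid i hi hib).2]
    · rw [hbeyond i hbi, min_eq_left ((hda hbi).trans hbw)]
  · have hflat : ∑ i ∈ Ico L b, fanoType1 d L ε (i + 1) = w * ((b : ℝ) - L) := by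
      rw [sum_congr rfl fun i hi => (hmid i (mem_Ico.1 hi).1 (mem_Ico.1 hi).2).1, sum_const,
        Nat.card_Ico, nsmul_eq_mul, Nat.cast_sub hLb, mul_comm]
    have hsum := hasSum_of_forall_ge_eq hdp.hasSum hbeyond
    rwa [← sum_range_add_sum_Ico _ hLb, hhead, hflat, hwb, add_sub_cancel, sub_self,
      add_zero] at hsum

lemma exists_fanoType1_eq_levelled (hda : Antitone fun i => d (i + 1))
    (hdp : IsPmf fun i => d (i + 1)) (hL : 1 ≤ L) (hε0 : 0 ≤ ε)
    (hε : ∑ i ∈ range L, d (i + 1) ≤ 1 - ε) :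
    ∃ v w, 0 ≤ w ∧ (fun i => fanoType1 d L ε (i + 1)) = levelled (fun i => d (i + 1)) L v w ∧
      ∑ i ∈ range L, fanoType1 d L ε (i + 1) = 1 - ε ∧
      HasSum (fun i => fanoType1 d L ε (i + 1)) 1 := by
  obtain ⟨v, hv, hhead⟩ := exists_fanoType1_eq_max hda hdp hL hε
  obtain ⟨w, hw0, hw, hsum⟩ := exists_fanoType1_eq_min hda hdp hL hε0 hε hhead
  refine ⟨v, w, hw0, funext fun i => ?_, hhead, hsum⟩
  rcases lt_or_ge i L with hi | hi
  · rw [hv i hi, levelled_of_lt hi]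
  · rw [hw i hi, levelled_of_le hi]

lemma isPmf_fanoType1_succ (hda : Antitone fun i => d (i + 1))
    (hdp : IsPmf fun i => d (i + 1)) (hL : 1 ≤ L) (hε0 : 0 ≤ ε)
    (hε : ∑ i ∈ range L, d (i + 1) ≤ 1 - ε) : IsPmf fun i => fanoType1 d L ε (i + 1) := by
  obtain ⟨v, w, hw, hlev, -, hsum⟩ := exists_fanoType1_eq_levelled hda hdp hL hε0 hε
  exact isPmf_of_hasSum (fun i => congrFun hlev i ▸ levelled_nonneg hdp.1 hw i) hsum

lemma antitone_fanoType1_succ (hda : Antitone fun i => d (i + 1))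
    (hdp : IsPmf fun i => d (i + 1)) (hL : 1 ≤ L) (hε0 : 0 ≤ ε)
    (hε : ∑ i ∈ range L, d (i + 1) ≤ 1 - ε) : Antitone fun i => fanoType1 d L ε (i + 1) := by
  obtain ⟨v, w, -, hlev, -, -⟩ := exists_fanoType1_eq_levelled hda hdp hL hε0 hε
  exact hlev ▸ antitone_levelled hda

lemma sum_range_fanoType1_succ_le (hda : Antitone fun i => d (i + 1))
    (hdp : IsPmf fun i => d (i + 1)) (hL : 1 ≤ L) (hε0 : 0 ≤ ε)
    (hε : ∑ i ∈ range L, d (i + 1) ≤ 1 - ε) {r : ℕ → ℝ} (hr : Antitone r) (hr0 : ∀ i, 0 ≤ r i)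
    (hdom : ∀ k, ∑ i ∈ range k, d (i + 1) ≤ ∑ i ∈ range k, r i)
    (hhead : 1 - ε ≤ ∑ i ∈ range L, r i) (k : ℕ) :
    ∑ i ∈ range k, fanoType1 d L ε (i + 1) ≤ ∑ i ∈ range k, r i := by
  obtain ⟨v, w, -, hlev, hfano, hsum⟩ := exists_fanoType1_eq_levelled hda hdp hL hε0 hε
  simp only [congrFun hlev] at hfano hsum ⊢
  rcases le_total k L with hk | hk
  · exact sum_range_levelled_le_of_le hda hr hdom (hfano.trans_le hhead) hk
  · exact sum_range_levelled_le_of_ge hda hdp hr hr0 hdom (hfano.trans_le hhead) hsum hk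

end FanoType1

section ListDecoding

open Finset

variable {β : Type*} {q : β → ℝ} {W : β → ℕ → ℝ} {e : β → ℕ → ℕ}

lemma sum_range_mixture_comp_isDecEnum (hq : IsPmf q) (hW : ∀ y, IsPmf (W y))
    (he : ∀ y, IsDecEnum (W y) (e y)) (k : ℕ) :
    ∑ i ∈ range k, mixture q (fun y => W y ∘ e y) i = ∑' y, q y * topSum (W y) k := by
  simp only [(he _).topSum_eq (hW _).1]
  exact (hasSum_sum_mixture hq (fun y => (he y).isPmf_comp (hW y)) (range k)).tsum_eq.symm

lemma topSum_mixture_le (hq : IsPmf q) (hW : ∀ y, IsPmf (W y))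
    (he : ∀ y, IsDecEnum (W y) (e y)) (k : ℕ) :
    topSum (mixture q W) k ≤ ∑ i ∈ range k, mixture q (fun y => W y ∘ e y) i := by
  refine csSup_le ⟨_, range k, card_range k, rfl⟩ ?_
  rintro _ ⟨s, rfl, rfl⟩
  exact hasSum_le (fun y => mul_le_mul_of_nonneg_left ((he y).sum_le (hW y).1 s) (hq.1 y))
    (hasSum_sum_mixture hq hW s)
    (hasSum_sum_mixture hq (fun y => (he y).isPmf_comp (hW y)) (range s.card))

end ListDecoding

theorem stmt_7_general {β : Type*} (φ : (ℕ → ℝ) → ENNReal) (hsym : SymmetricOnPmf φ)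
    (hconc : ConcaveOnPmf φ) (hlsc : LowerSemicontinuousOn φ {p | IsPmf p})
    (Q d : ℕ → ℝ) (L : ℕ) (ε : ℝ) (hd : IsDecRearr Q d) (hL : 1 ≤ L) (hε : ε ≤ 1 - topSum Q L)
    (q : β → ℝ) (W : β → ℕ → ℝ) (hq : IsPmf q) (hW : ∀ y, IsPmf (W y))
    (hmarg : ∀ x, ∑' y, q y * W y x = Q x)
    (hPe : 1 - ∑' y, q y * topSum (W y) L ≤ ε) :
    ∑' y, ENNReal.ofReal (q y) * φ (W y) ≤ φ (fanoType1 d L ε) := by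
  obtain rfl : mixture q W = Q := funext hmarg
  choose e he using fun y => exists_isDecEnum (hW y).summable.tendsto_cofinite_zero (hW y).1
  have hV : ∀ y, IsPmf (W y ∘ e y) := fun y => (he y).isPmf_comp (hW y)
  have hR : IsPmf (mixture q fun y => W y ∘ e y) := isPmf_mixture hq hV
  have hRa : Antitone (mixture q fun y => W y ∘ e y) :=
    antitone_mixture hq hV fun y => (he y).antitone
  have hRL : 1 - ε ≤ ∑ i ∈ Finset.range L, mixture q (fun y => W y ∘ e y) i := by
    linarith [sum_range_mixture_comp_isDecEnum hq hW he L]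
  have hda := hd.antitone_succ
  have hdp := hd.isPmf_succ (isPmf_mixture hq hW)
  have hdL : ∑ i ∈ Finset.range L, d (i + 1) ≤ 1 - ε := by linarith [hd.sum_range_eq_topSum L]
  have hε0 : 0 ≤ ε := by linarith [hR.sum_le_one (Finset.range L)]
  have hP₁ := isPmf_fanoType1_succ hda hdp hL hε0 hdL
  calc ∑' y, ENNReal.ofReal (q y) * φ (W y)
    _ = ∑' y, ENNReal.ofReal (q y) * φ (W y ∘ e y) := by
      simp only [hsym.apply_comp_injective hlsc (hW _) (he _).injective (he _).support_subset]
    _ ≤ φ (mixture q fun y => W y ∘ e y) := hconc.tsum_le_mixture hq hV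
    _ ≤ φ (fun i => fanoType1 d L ε (i + 1)) :=
      hconc.le_of_sum_range_le hsym hlsc hP₁ (antitone_fanoType1_succ hda hdp hL hε0 hdL) hR
        (sum_range_fanoType1_succ_le hda hdp hL hε0 hdL hRa hR.1
          (fun k => (hd.sum_range_eq_topSum k).trans_le (topSum_mixture_le hq hW he k)) hRL)
    _ = φ (fanoType1 d L ε) :=
      hsym.apply_comp_succ hlsc hP₁ ((fanoType1_zero hda hdp hL).trans hd.1)

/-- Fano-type inequality (Theorem 1): for a symmetric, concave, lower
semicontinuous `φ : P(X) → [0,∞]`, any pair `(X,Y)` with `P_X = Q` and list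
decoding error at most `ε` satisfies `h_φ(X|Y) = E[φ(P_{X|Y})] ≤ φ(P₁)`, where
`P₁` is the Fano-type-1 distribution of `(Q, L, ε)`. -/
theorem stmt_7 {β : Type*} (φ : (ℕ → ℝ) → ENNReal)
    (hsym : ∀ (p : ℕ → ℝ) (σ : Equiv.Perm ℕ), φ (p ∘ σ) = φ p)
    (hconc : ∀ p r : ℕ → ℝ, IsPmf p → IsPmf r → ∀ l : ℝ, 0 ≤ l → l ≤ 1 →
      ENNReal.ofReal l * φ p + ENNReal.ofReal (1 - l) * φ r ≤
        φ (fun x => l * p x + (1 - l) * r x))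
    (hlsc : ∀ (P : ℕ → ℝ) (Pn : ℕ → ℕ → ℝ),
      (∀ x, Tendsto (fun n => Pn n x) atTop (𝓝 (P x))) →
      φ P ≤ liminf (fun n => φ (Pn n)) atTop)
    (Q d : ℕ → ℝ) (L : ℕ) (ε : ℝ)
    (hQ : IsPmf Q) (hd : IsDecRearr Q d) (hL : 1 ≤ L)
    (hε0 : 0 ≤ ε) (hε1 : ε ≤ 1 - topSum Q L)
    (q : β → ℝ) (W : β → ℕ → ℝ) (hq : IsPmf q) (hW : ∀ y, IsPmf (W y))
    (hmarg : ∀ x, ∑' y, q y * W y x = Q x)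
    (hPe : 1 - ∑' y, q y * topSum (W y) L ≤ ε) :
    ∑' y, ENNReal.ofReal (q y) * φ (W y) ≤ φ (fanoType1 d L ε) := by
  exact stmt_7_general φ (fun p _ => hsym p) hconc
    (lowerSemicontinuousOn_of_le_liminf_seq fun P Pn h => hlsc P Pn (tendsto_pi_nhds.1 h))
    Q d L ε hd hL hε1 q W hq hW hmarg hPe
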